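/- For every ξ ∈ ℝ with |ξ| < 1 and every η ∈ [-1, 1], the series Σ_{n=0}^{∞} P_n(η) ξⁿ converges and its sum equals (1 - 2ξη + ξ²)^{-1/2}; that is, (1 - 2ξη + ξ²)^{-1/2} is the generating function of the Legendre polynomials. -/

import Mathlib

open Polynomial

/-- The n-th Legendre polynomial, defined via the Rodrigues formula
P_n(eta) = (1/(2^n n!)) d^n/d eta^n (eta^2 - 1)^n. -/
noncomputable def legendre (n : ℕ) : Polynomial ℝ :=
  ((1 : ℝ) / (2 ^ n * n.factorial)) • (Polynomial.derivative^[n] ((X ^ 2 - 1) ^ n))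



lemma leg_iter_X_mul (f : Polynomial ℝ) (n : ℕ) :
    derivative^[n + 1] (X * f) = X * derivative^[n + 1] f + ((n : ℝ[X]) + 1) * derivative^[n] f := by
  induction n with
  | zero => simp; ring
  | succ n ih =>
    rw [Function.iterate_succ_apply', ih]
    rw [Function.iterate_succ_apply' _ (n + 1) f, Function.iterate_succ_apply' _ n f]
    simp only [derivative_add, derivative_mul, derivative_X, derivative_natCast, derivative_one]
    push_cast
    ring

noncomputable def legL (n : ℕ) : Polynomial ℝ := derivative^[n] ((X ^ 2 - 1) ^ n)

lemma leg_der_pow (n : ℕ) : derivative ((X ^ 2 - 1 : ℝ[X]) ^ (n + 1))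
    = ((2 * (n + 1) : ℕ) : ℝ[X]) * (X * (X ^ 2 - 1) ^ n) := by
  rw [derivative_pow]
  simp
  ring

lemma legL_succ_eq (n : ℕ) :
    legL (n + 1) = ((2 * (n + 1) : ℕ) : ℝ[X]) * derivative^[n] (X * (X ^ 2 - 1) ^ n) := by
  rw [legL, Function.iterate_succ_apply, leg_der_pow, iterate_derivative_natCast_mul]

lemma legL_der (n : ℕ) :
    derivative (legL (n + 1)) = 2 * ((n : ℝ[X]) + 1) * (X * derivative (legL n)
      + ((n : ℝ[X]) + 1) * legL n) := by
  rw [legL_succ_eq, derivative_natCast_mul, ← Function.iterate_succ_apply' derivative,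
    leg_iter_X_mul, Function.iterate_succ_apply', legL]
  push_cast
  ring

lemma legL_succ (n : ℕ) :
    legL (n + 1) = 2 * (X ^ 2 - 1) * derivative (legL n) + 2 * ((n : ℝ[X]) + 1) * X * legL n := by
  have h1 := legL_succ_eq n
  have h2 : legL (n + 1) = derivative^[n+1] (X * (X * (X ^ 2 - 1) ^ n))
      - derivative^[n+1] ((X ^ 2 - 1) ^ n) := by
    rw [← iterate_derivative_sub, legL]
    congr 1
    ring
  rw [leg_iter_X_mul, leg_iter_X_mul, Function.iterate_succ_apply'] at h2
  push_cast at h1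
  rw [← legL] at h2
  linear_combination 2 * h2 - h1

lemma legL_rec (n : ℕ) :
    legL (n + 2) = 2 * (2 * (n : ℝ[X]) + 3) * X * legL (n + 1) - 4 * ((n : ℝ[X]) + 1) ^ 2 * legL n := by
  have h1 := legL_succ (n + 1)
  have h2 := legL_succ n
  have h3 := legL_der n
  push_cast at h1
  linear_combination h1 + 2 * (X ^ 2 - 1) * h3 - 2 * ((n : ℝ[X]) + 1) * X * h2

lemma legendre_rec (η : ℝ) (n : ℕ) :
    ((n : ℝ) + 2) * (legendre (n + 2)).eval η =
      (2 * n + 3) * η * (legendre (n + 1)).eval η - (n + 1) * (legendre n).eval η := by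
  have h := congrArg (Polynomial.eval η) (legL_rec n)
  simp only [eval_sub, eval_mul, eval_pow, eval_add, eval_ofNat, eval_natCast, eval_X,
    eval_one] at h
  have hL : ∀ m, (legendre m).eval η = 1 / (2 ^ m * m.factorial) * (legL m).eval η := by
    intro m
    simp only [legendre, legL, eval_smul, smul_eq_mul]
  rw [hL, hL, hL, h]
  have : (n.factorial : ℝ) ≠ 0 := by positivity
  rw [Nat.factorial_succ (n + 1), Nat.factorial_succ n]
  push_cast
  have : (n : ℝ) + 1 ≠ 0 := by positivity
  have : (n : ℝ) + 1 + 1 ≠ 0 := by positivity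
  field_simp
  ring

noncomputable def legc (n : ℕ) : ℂ := (Nat.centralBinom n : ℂ) / 4 ^ n

lemma legc_succ (n : ℕ) : 2 * ((n : ℂ) + 1) * legc (n + 1) = (2 * n + 1) * legc n := by
  have h : ((n : ℂ) + 1) * Nat.centralBinom (n + 1) = 2 * (2 * n + 1) * Nat.centralBinom n := by
    exact_mod_cast Nat.succ_mul_centralBinom_succ n
  simp only [legc, pow_succ]
  field_simp
  linear_combination 2 * h

lemma legc_norm (n : ℕ) : ‖legc n‖ ≤ 1 := by
  simp only [legc, norm_div, norm_pow, Complex.norm_natCast, Complex.norm_ofNat]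
  rw [div_le_one (by positivity)]
  exact_mod_cast Nat.centralBinom_le_four_pow n

noncomputable def legA (w : ℂ) : PowerSeries ℂ := PowerSeries.mk fun n => legc n * w ^ n

lemma legA_der (w : ℂ) :
    2 * PowerSeries.derivative ℂ (legA w) =
      PowerSeries.C w * legA w + PowerSeries.C (2 * w) * (PowerSeries.X * PowerSeries.derivative ℂ (legA w)) := by
  have e2 : (2 : PowerSeries ℂ) = PowerSeries.C 2 := (map_ofNat _ 2).symm
  rw [e2]
  ext n
  cases n with
  | zero =>
    simp [PowerSeries.coeff_derivative, legA]
    have := legc_succ 0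
    simp at this
    linear_combination w * this
  | succ n =>
    simp only [map_add, PowerSeries.coeff_C_mul, PowerSeries.coeff_succ_X_mul,
      PowerSeries.coeff_derivative, legA, PowerSeries.coeff_mk]
    have := legc_succ (n + 1)
    push_cast at this ⊢
    linear_combination w ^ (n + 2) * this

lemma legA_const (w : ℂ) : PowerSeries.constantCoeff (legA w) = 1 := by
  rw [← PowerSeries.coeff_zero_eq_constantCoeff_apply]
  simp [legA, legc]

lemma legA_sq : legA 1 * legA 1 = PowerSeries.mk 1 := by
  have h : (1 - PowerSeries.X) * (legA 1 * legA 1) = 1 := by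
    apply PowerSeries.derivative.ext
    · have := legA_der 1
      simp only [Derivation.leibniz, smul_eq_mul, map_sub, PowerSeries.derivative_X,
        PowerSeries.derivative_one]
      simp only [mul_one, map_one, one_mul] at this
      have e2 : (PowerSeries.C (2:ℂ)) = 2 := map_ofNat _ 2
      rw [e2] at this
      linear_combination legA 1 * this
    · simp [legA_const]
  have h2 := PowerSeries.mk_one_mul_one_sub_eq_one ℂ
  calc legA 1 * legA 1 = (PowerSeries.mk 1 * (1 - PowerSeries.X)) * (legA 1 * legA 1) := by
        rw [h2, one_mul]
    _ = _ := by rw [mul_assoc, h, mul_one]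

lemma legA_mul_der (w v η : ℂ) (h1 : w * v = 1) (h2 : w + v = 2 * η) :
    PowerSeries.derivative ℂ (legA w * legA v) =
      PowerSeries.C (2 * η) * (PowerSeries.X * PowerSeries.derivative ℂ (legA w * legA v))
      - PowerSeries.X * (PowerSeries.X * PowerSeries.derivative ℂ (legA w * legA v))
      + PowerSeries.C η * (legA w * legA v) - PowerSeries.X * (legA w * legA v) := by
  have hw := legA_der w
  have hv := legA_der v
  have c1 : PowerSeries.C w * PowerSeries.C v = 1 := by rw [← map_mul, h1, map_one]
  have e2 : (PowerSeries.C (2:ℂ)) = 2 := map_ofNat _ 2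
  have c2 : PowerSeries.C w + PowerSeries.C v = 2 * PowerSeries.C η := by
    rw [← map_add, h2, map_mul, e2]
  simp only [Derivation.leibniz, smul_eq_mul, map_mul, e2] at *
  have h20 : (2 : PowerSeries ℂ) ≠ 0 := by
    rw [← (map_ofNat PowerSeries.C 2 : PowerSeries.C (2:ℂ) = 2)]
    exact fun h => two_ne_zero ((map_eq_zero_iff _ PowerSeries.C_injective).1 h)
  apply mul_left_cancel₀ h20
  generalize PowerSeries.derivative ℂ (legA w) = A' at *
  generalize PowerSeries.derivative ℂ (legA v) = B' at *
  generalize legA w = A at *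
  generalize legA v = B at *
  generalize PowerSeries.C w = W at *
  generalize PowerSeries.C v = V at *
  generalize PowerSeries.C η = H at *
  generalize (PowerSeries.X : PowerSeries ℂ) = x at *
  linear_combination (1 - V * x) * B * hw + (1 - W * x) * A * hv
    + (-2*x*A*B - 2 * x^2 * (A*B' + B * A')) * c1 + (2 * x * (A*B' + B*A') + A*B) * c2

lemma legA_mul_coeff (w v : ℂ) (η : ℝ) (h1 : w * v = 1) (h2 : w + v = 2 * η) (n : ℕ) :
    PowerSeries.coeff n (legA w * legA v) = (((legendre n).eval η : ℝ) : ℂ) := by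
  have hd := legA_mul_der w v η h1 h2
  have h0 : PowerSeries.coeff 0 (legA w * legA v) = (((legendre 0).eval η : ℝ) : ℂ) := by
    simp [legA_const, legendre]
  have h1' : PowerSeries.coeff 1 (legA w * legA v) = (((legendre 1).eval η : ℝ) : ℂ) := by
    have := congrArg (PowerSeries.coeff 0) hd
    rw [PowerSeries.coeff_derivative] at this
    simp [legA_const, -Derivation.leibniz] at this
    rw [this]
    simp [legendre]
    ring
  have hr : ∀ n, PowerSeries.coeff n (legA w * legA v) = (((legendre n).eval η : ℝ) : ℂ) ∧
      PowerSeries.coeff (n + 1) (legA w * legA v) = (((legendre (n + 1)).eval η : ℝ) : ℂ) := by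
    intro n
    induction n with
    | zero => exact ⟨h0, h1'⟩
    | succ n ih =>
      refine ⟨ih.2, ?_⟩
      have hl : ((n : ℂ) + 2) * (((legendre (n + 2)).eval η : ℝ) : ℂ) =
        (2 * n + 3) * η * (((legendre (n + 1)).eval η : ℝ) : ℂ)
          - (n + 1) * (((legendre n).eval η : ℝ) : ℂ) := by
        exact_mod_cast legendre_rec η n
      have := congrArg (PowerSeries.coeff (n + 1)) hd
      have hx : PowerSeries.coeff n (PowerSeries.X * PowerSeries.derivative ℂ (legA w * legA v))
          = PowerSeries.coeff n (legA w * legA v) * n := by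
        cases n with
        | zero => simp
        | succ n => rw [PowerSeries.coeff_succ_X_mul, PowerSeries.coeff_derivative]; push_cast; rfl
      rw [map_sub, map_add, map_sub, PowerSeries.coeff_C_mul, PowerSeries.coeff_C_mul,
        PowerSeries.coeff_succ_X_mul, PowerSeries.coeff_succ_X_mul, PowerSeries.coeff_succ_X_mul,
        hx, PowerSeries.coeff_derivative, PowerSeries.coeff_derivative, ih.1, ih.2] at this
      have hn : ((n : ℂ) + 2) ≠ 0 := by exact_mod_cast (by positivity : ((n : ℝ) + 2) ≠ 0)
      apply mul_left_cancel₀ hn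
      rw [hl]
      push_cast at this
      linear_combination this
  exact (hr n).1

lemma leg_summable (z : ℂ) (hz : ‖z‖ < 1) : Summable fun n => ‖legc n * z ^ n‖ := by
  refine Summable.of_nonneg_of_le (fun _ => norm_nonneg _) (fun n => ?_)
    (summable_geometric_of_lt_one (norm_nonneg z) hz)
  rw [norm_mul, norm_pow]
  exact mul_le_of_le_one_left (by positivity) (legc_norm n)

lemma leg_prod (w v ξ : ℂ) (hw : ‖w * ξ‖ < 1) (hv : ‖v * ξ‖ < 1) :
    HasSum (fun n => PowerSeries.coeff n (legA w * legA v) * ξ ^ n)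
      ((∑' n, legc n * (w * ξ) ^ n) * ∑' n, legc n * (v * ξ) ^ n) := by
  have sw := leg_summable _ hw
  have sv := leg_summable _ hv
  rw [tsum_mul_tsum_eq_tsum_sum_antidiagonal_of_summable_norm sw sv]
  have := (summable_norm_sum_mul_antidiagonal_of_summable_norm sw sv).of_norm.hasSum
  refine Eq.mpr (congrArg (fun f => HasSum f _) (_root_.funext fun n => ?_)) this
  rw [PowerSeries.coeff_mul, Finset.sum_mul]
  refine Finset.sum_congr rfl fun p hp => ?_
  rw [← Finset.HasAntidiagonal.mem_antidiagonal.1 hp]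
  simp only [legA, PowerSeries.coeff_mk]
  ring

lemma leg_S_sq (z : ℂ) (hz : ‖z‖ < 1) :
    (∑' n, legc n * z ^ n) * (∑' n, legc n * z ^ n) = (1 - z)⁻¹ := by
  have h := leg_prod 1 1 z (by simpa using hz) (by simpa using hz)
  rw [legA_sq] at h
  simp only [one_mul, PowerSeries.coeff_mk, Pi.one_apply] at h
  exact h.unique (hasSum_geometric_of_norm_lt_one hz)

/-- (1 - 2 xi eta + xi^2)^(-1/2) is the generating function of the Legendre polynomials:
for |xi| < 1 and eta in [-1,1], the series Σ P_n(eta) xi^n converges to it. -/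
theorem stmt_1 (ξ η : ℝ) (hξ : |ξ| < 1) (hη : η ∈ Set.Icc (-1 : ℝ) 1) :
    HasSum (fun n : ℕ => (legendre n).eval η * ξ ^ n)
      ((Real.sqrt (1 - 2 * ξ * η + ξ ^ 2))⁻¹) := by
  obtain ⟨s, hs⟩ : ∃ s : ℝ, s ^ 2 = 1 - η ^ 2 :=
    ⟨Real.sqrt (1 - η ^ 2), Real.sq_sqrt (by nlinarith [hη.1, hη.2])⟩
  set w : ℂ := ⟨η, s⟩ with hwdef
  set v : ℂ := (starRingEnd ℂ) w with hvdef
  have hwv : w * v = 1 := by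
    apply Complex.ext <;> simp [hwdef, hvdef] <;> nlinarith
  have hadd : w + v = 2 * (η : ℂ) := by
    apply Complex.ext <;> simp [hwdef, hvdef]; ring
  have hnw : ‖w‖ = 1 := by
    have : ‖w‖ ^ 2 = 1 := by
      rw [← Complex.normSq_eq_norm_sq, Complex.normSq_apply]
      simp only [hwdef]; nlinarith
    exact (pow_eq_one_iff_of_nonneg (norm_nonneg _) two_ne_zero).1 this
  have hnv : ‖v‖ = 1 := by rw [hvdef, Complex.norm_conj, hnw]
  have hz : ‖w * (ξ : ℂ)‖ < 1 := by rw [norm_mul, hnw]; simpa using hξ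
  have hz' : ‖v * (ξ : ℂ)‖ < 1 := by rw [norm_mul, hnv]; simpa using hξ
  have h := leg_prod w v ξ hz hz'
  have hsq := leg_S_sq _ hz
  have hconj : (∑' n, legc n * (v * (ξ : ℂ)) ^ n)
      = (starRingEnd ℂ) (∑' n, legc n * (w * (ξ : ℂ)) ^ n) := by
    rw [Complex.conj_tsum]
    refine tsum_congr fun n => ?_
    have h4 : (starRingEnd ℂ) 4 = 4 := map_ofNat _ 4
    simp [legc, hvdef, h4]
  rw [hconj, Complex.mul_conj, Complex.normSq_eq_norm_sq] at h
  have hn : ‖∑' n, legc n * (w * (ξ : ℂ)) ^ n‖ ^ 2 = (Real.sqrt (1 - 2 * ξ * η + ξ ^ 2))⁻¹ := by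
    rw [sq, ← norm_mul, hsq, norm_inv]
    congr 1
    rw [eq_comm, Real.sqrt_eq_iff_mul_self_eq_of_pos]
    · rw [← sq, ← Complex.normSq_eq_norm_sq, Complex.normSq_apply]
      simp [hwdef]
      linear_combination ξ ^ 2 * hs
    · rw [norm_pos_iff, sub_ne_zero]
      rintro h
      rw [← h] at hz
      simp at hz
  rw [hn] at h
  simp only [legA_mul_coeff w v η hwv hadd] at h
  exact_mod_cast h
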